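/- For every integer r ≥ 1, every real λ > −1/2 and every θ ∈ ℝ, writing t = cos θ, one has Σ_{s=0}^{r} (−1)^s · binom(r,s) · ((λ+r)_s/(λ+1/2)_s) · (1−t²)^s = Σ_{s=0}^{r} d_s^r(λ) · cos((2r−2s)θ), where d_s^r(λ) = 2 · (2r+1−s)_s · (λ)_s · (λ+r)_{r−s} / (4^r · (λ+1/2)_r · s!) for s = 0,1,…,r−1, and d_r^r(λ) = (r+1)_r · (λ)_r / (4^r · (λ+1/2)_r · r!). (This decomposes the normalized Gegenbauer polynomial P_{2r}^{(λ−1/2)} in terms of Chebyshev polynomials of the first kind.) -/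

import Mathlib

open Real Finset

/-- Pochhammer symbol (z)_n = z(z+1)...(z+n-1), with (z)_0 = 1. -/
noncomputable def poch (z : ℝ) (n : ℕ) : ℝ := ∏ i ∈ Finset.range n, (z + i)

/-- Coefficient d_s^r(lambda). -/
noncomputable def dcoef (r s : ℕ) (l : ℝ) : ℝ :=
  if s < r then
    2 * poch (2 * r + 1 - s) s * poch l s * poch (l + r) (r - s) /
      (4 ^ r * poch (l + 1 / 2) r * Nat.factorial s)
  else
    poch (r + 1) r * poch l r / (4 ^ r * poch (l + 1 / 2) r * Nat.factorial r)

theorem poch_zero (z : ℝ) : poch z 0 = 1 := by simp [poch]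

theorem poch_succ (z : ℝ) (n : ℕ) : poch z (n + 1) = poch z n * (z + n) := by
  simp [poch, Finset.prod_range_succ]

theorem poch_add (z : ℝ) (m n : ℕ) : poch z (m + n) = poch z m * poch (z + m) n := by
  simp [poch, Finset.prod_range_add, add_assoc]

theorem poch_succ_left (z : ℝ) (n : ℕ) : poch z (n + 1) = z * poch (z + 1) n := by
  rw [add_comm, poch_add]
  simp [poch]

theorem poch_pos {z : ℝ} (hz : 0 < z) (n : ℕ) : 0 < poch z n :=
  Finset.prod_pos fun i _ => by positivity

theorem poch_mul_factorial (m s : ℕ) : poch (m + 1) s * m.factorial = (m + s).factorial := by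
  induction s with
  | zero => simp [poch_zero]
  | succ s ih =>
    rw [poch_succ, ← add_assoc, Nat.factorial_succ]
    push_cast
    rw [← ih]
    ring

/-- The general term of the balanced hypergeometric sum. -/
noncomputable def saalTerm (n : ℕ) (a b c d : ℝ) (k : ℕ) : ℝ :=
  (-1) ^ k * (n.choose k : ℝ) * poch (a + n) k * poch b k / (poch c k * poch d k)

theorem saalTerm_succ_sub (n : ℕ) (a b c d : ℝ) (hc : 0 < c) (hd : 0 < d) (k : ℕ) :
    saalTerm (n + 1) a b c d (k + 1) - saalTerm n a b c d (k + 1) =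
      -((a + 2 * n + 1) * b / (c * d)) *
        saalTerm n (a + 1) (b + 1) (c + 1) (d + 1) k := by
  have key : ((n + 1).choose (k + 1) : ℝ) * (a + n + 1 + k) -
      (n.choose (k + 1) : ℝ) * (a + n) = (a + 2 * n + 1) * n.choose k := by
    have h1 : ((n + 1).choose (k + 1) : ℝ) = n.choose k + n.choose (k + 1) := by
      exact_mod_cast Nat.choose_succ_succ n k
    have h2 : ((n + 1 : ℕ) : ℝ) * n.choose k = (n + 1).choose (k + 1) * ((k + 1 : ℕ) : ℝ) := by
      exact_mod_cast Nat.add_one_mul_choose_eq n k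
    push_cast at h2
    rw [h1] at h2 ⊢
    linear_combination -h2
  have e1 : poch (a + (n + 1 : ℕ)) (k + 1) = poch (a + 1 + n) k * (a + n + 1 + k) := by
    rw [poch_succ]
    push_cast
    ring_nf
  have e2 : poch (a + n) (k + 1) = (a + n) * poch (a + 1 + n) k := by
    rw [poch_succ_left]
    ring_nf
  have hc' := (poch_pos (show 0 < c + 1 by linarith) k).ne'
  have hd' := (poch_pos (show 0 < d + 1 by linarith) k).ne'
  simp only [saalTerm]
  rw [e1, e2, poch_succ_left b, poch_succ_left c, poch_succ_left d]
  field_simp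
  rw [pow_succ]
  linear_combination (-(-1) ^ k * poch (a + 1 + n) k * b * poch (b + 1) k : ℝ) * key

/-- The Pfaff–Saalschütz summation, in the balanced form `c + d = a + b + 1`. -/
theorem sum_saalTerm (n : ℕ) : ∀ a b c d : ℝ, 0 < c → 0 < d → c + d = a + b + 1 →
    ∑ k ∈ Finset.range (n + 1), saalTerm n a b c d k =
      poch (c - b) n * poch (d - b) n / (poch c n * poch d n) := by
  induction n with
  | zero => intro a b c d _ _ _; simp [saalTerm, poch_zero]
  | succ n ih =>
    intro a b c d hc hd h
    have hdiff : ∑ k ∈ Finset.range (n + 1 + 1), saalTerm (n + 1) a b c d k =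
        ∑ k ∈ Finset.range (n + 1), saalTerm n a b c d k -
          (a + 2 * n + 1) * b / (c * d) *
            ∑ k ∈ Finset.range (n + 1), saalTerm n (a + 1) (b + 1) (c + 1) (d + 1) k := by
      have hlast : ∑ k ∈ Finset.range (n + 1), saalTerm n a b c d k =
          ∑ k ∈ Finset.range (n + 1 + 1), saalTerm n a b c d k := by
        rw [Finset.sum_range_succ _ (n + 1)]
        simp [saalTerm]
      rw [hlast, Finset.sum_range_succ' _ (n + 1), Finset.sum_range_succ' _ (n + 1),
        Finset.mul_sum]
      have hs : ∑ k ∈ Finset.range (n + 1), saalTerm (n + 1) a b c d (k + 1) =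
          ∑ k ∈ Finset.range (n + 1), saalTerm n a b c d (k + 1) -
            ∑ k ∈ Finset.range (n + 1), (a + 2 * n + 1) * b / (c * d) *
              saalTerm n (a + 1) (b + 1) (c + 1) (d + 1) k := by
        rw [← Finset.sum_sub_distrib]
        refine Finset.sum_congr rfl fun k _ => ?_
        linear_combination saalTerm_succ_sub n a b c d hc hd k
      have h0 : saalTerm (n + 1) a b c d 0 = saalTerm n a b c d 0 := by
        simp [saalTerm, poch_zero]
      rw [hs, h0]
      ring
    rw [hdiff, ih a b c d hc hd h,
      ih (a + 1) (b + 1) (c + 1) (d + 1) (by linarith) (by linarith) (by linarith)]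
    have pc : c * poch (c + 1) n = poch c n * (c + n) := by
      rw [← poch_succ, poch_succ_left]
    have pd : d * poch (d + 1) n = poch d n * (d + n) := by
      rw [← poch_succ, poch_succ_left]
    have hc' := (poch_pos hc n).ne'
    have hd' := (poch_pos hd n).ne'
    have hcn : c + n ≠ 0 := by positivity
    have hdn : d + n ≠ 0 := by positivity
    have hshift : (a + 2 * n + 1) * b / (c * d) *
        (poch (c + 1 - (b + 1)) n * poch (d + 1 - (b + 1)) n /
          (poch (c + 1) n * poch (d + 1) n)) =
        (a + 2 * n + 1) * b * (poch (c - b) n * poch (d - b) n) /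
          (poch c n * (c + n) * (poch d n * (d + n))) := by
      rw [← pc, ← pd, add_sub_add_right_eq_sub, add_sub_add_right_eq_sub, div_mul_div_comm]
      congr 1
      ring
    rw [hshift]
    simp only [poch_succ]
    obtain rfl : a = c + d - b - 1 := by linarith
    field_simp
    ring

theorem factorial_two_mul_add (j k : ℕ) :
    ((2 * j + 2 * k).factorial : ℝ) * j.factorial =
      4 ^ k * (j + k).factorial * poch (j + 1 / 2) k * (2 * j).factorial := by
  induction k with
  | zero => simp [poch_zero]; ring
  | succ k ih =>
    rw [show 2 * j + 2 * (k + 1) = 2 * j + 2 * k + 1 + 1 by ring, ← add_assoc j k 1,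
      Nat.factorial_succ, Nat.factorial_succ, Nat.factorial_succ, poch_succ]
    push_cast
    rw [pow_succ]
    linear_combination (2 * (j : ℝ) + 2 * k + 1 + 1) * (2 * j + 2 * k + 1) * ih

theorem choose_mul_choose_two_mul (j n k : ℕ) (hk : k ≤ n) :
    ((j + n).choose (j + k) : ℝ) * ((2 * (j + k)).choose (j + k + j) : ℝ) / 4 ^ k =
      (j + n).choose j * n.choose k * poch (j + 1 / 2) k / poch (2 * j + 1) k := by
  obtain ⟨m, rfl⟩ := Nat.exists_eq_add_of_le hk
  have hp := (poch_pos (show (0 : ℝ) < 2 * j + 1 by positivity) k).ne'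
  have h1 := poch_mul_factorial (2 * j) k
  push_cast at h1
  have h2 := factorial_two_mul_add j k
  rw [← add_assoc, show 2 * (j + k) = (j + k + j) + k by ring, Nat.cast_add_choose,
    Nat.cast_add_choose, add_assoc j k m, Nat.cast_add_choose, Nat.cast_add_choose,
    show j + k + j + k = 2 * j + 2 * k by ring, show j + k + j = 2 * j + k by ring, ← h1]
  generalize poch ((j : ℝ) + 1 / 2) k = q at h2 ⊢
  have f1 : ((2 * j).factorial : ℝ) ≠ 0 := by positivity
  field_simp
  linear_combination h2

theorem poch_div_factorial (m s : ℕ) :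
    poch (m + 1) s / s.factorial = ((m + s).choose s : ℝ) := by
  rw [add_comm m s, Nat.cast_add_choose, add_comm s m, ← poch_mul_factorial]
  field_simp

/-- The coefficient of `cos (2jθ)` obtained by expanding the powers of `sin² θ`. -/
theorem sum_choose_mul_poch (j n : ℕ) (l : ℝ) (hl : -(1 / 2 : ℝ) < l) :
    ∑ s ∈ Finset.range (j + n + 1), (-1 : ℝ) ^ s * ((j + n).choose s : ℝ) *
        (poch (l + (j + n : ℕ)) s / poch (l + 1 / 2) s) *
        ((-1) ^ j * ((2 * s).choose (s + j) : ℝ) / 4 ^ s) =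
      ((2 * (j + n)).choose n : ℝ) * poch l n * poch (l + (j + n : ℕ)) j /
        (4 ^ (j + n) * poch (l + 1 / 2) (j + n)) := by
  rw [add_assoc j n 1, Finset.sum_range_add]
  have hzero : ∑ s ∈ Finset.range j, (-1 : ℝ) ^ s * ((j + n).choose s : ℝ) *
        (poch (l + (j + n : ℕ)) s / poch (l + 1 / 2) s) *
        ((-1) ^ j * ((2 * s).choose (s + j) : ℝ) / 4 ^ s) = 0 := by
    refine Finset.sum_eq_zero fun s hs => ?_
    have := Finset.mem_range.mp hs
    rw [Nat.choose_eq_zero_of_lt (show 2 * s < s + j by omega)]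
    simp
  have hterm : ∀ k ∈ Finset.range (n + 1),
      (-1 : ℝ) ^ (j + k) * ((j + n).choose (j + k) : ℝ) *
        (poch (l + (j + n : ℕ)) (j + k) / poch (l + 1 / 2) (j + k)) *
        ((-1) ^ j * ((2 * (j + k)).choose (j + k + j) : ℝ) / 4 ^ (j + k)) =
      (j + n).choose j * poch (l + (j + n : ℕ)) j / (poch (l + 1 / 2) j * 4 ^ j) *
        saalTerm n (l + 2 * j) (j + 1 / 2) (2 * j + 1) (l + 1 / 2 + j) k := by
    intro k hk
    have h := choose_mul_choose_two_mul j n k (by have := Finset.mem_range.mp hk; omega)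
    have hs : (-1 : ℝ) ^ j * (-1) ^ j = 1 := by rw [← mul_pow]; simp
    rw [poch_add, poch_add, saalTerm,
      show l + (j + n : ℕ) + (j : ℝ) = l + 2 * j + n by push_cast; ring]
    calc _ = ((-1 : ℝ) ^ j * (-1) ^ j) * (-1) ^ k *
          (((j + n).choose (j + k) : ℝ) * ((2 * (j + k)).choose (j + k + j) : ℝ) / 4 ^ k) *
          (poch (l + (j + n : ℕ)) j * poch (l + 2 * j + n) k /
            (poch (l + 1 / 2) j * poch (l + 1 / 2 + j) k)) / 4 ^ j := by
          rw [pow_add, pow_add]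
          field_simp
      _ = _ := by
          rw [h, hs]
          field_simp
  have hd : 0 < l + 1 / 2 := by linarith
  rw [hzero, zero_add, Finset.sum_congr rfl hterm, ← Finset.mul_sum,
    sum_saalTerm n _ _ _ _ (by positivity) (by positivity) (by ring)]
  have h := choose_mul_choose_two_mul j n n le_rfl
  rw [Nat.choose_self, Nat.choose_self,
    ← Nat.choose_symm_of_eq_add (show 2 * (j + n) = n + (j + n + j) by ring)] at h
  rw [show (2 * j + 1 - (j + 1 / 2) : ℝ) = j + 1 / 2 by ring,
    show l + 1 / 2 + j - (j + 1 / 2 : ℝ) = l by ring, poch_add (l + 1 / 2)]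
  calc _ = ((j + n).choose j * (1 : ℕ) * poch (j + 1 / 2) n / poch (2 * j + 1) n : ℝ) *
        (poch l n * poch (l + (j + n : ℕ)) j /
          (4 ^ j * (poch (l + 1 / 2) j * poch (l + 1 / 2 + j) n))) := by
        push_cast
        field_simp
    _ = _ := by
        rw [← h, pow_add]
        push_cast
        field_simp

theorem two_mul_sin_pow_eq_sum_range (s : ℕ) (θ : ℝ) :
    (4 : ℝ) ^ s * (1 - Real.cos θ ^ 2) ^ s =
      ∑ k ∈ Finset.range (2 * s + 1), (-1 : ℝ) ^ (s + k) * ((2 * s).choose k : ℝ) *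
        Real.cos ((2 * k - 2 * s : ℝ) * θ) := by
  have hbase : (4 * (1 - Real.cos θ ^ 2) : ℝ) =
      ((-1 : ℂ) * (Complex.exp (θ * Complex.I) + -Complex.exp (-θ * Complex.I)) ^ 2) := by
    have h := Complex.two_sin (θ : ℂ)
    have hsq := Complex.sin_sq_add_cos_sq (θ : ℂ)
    have h2 : Complex.exp (θ * Complex.I) + -Complex.exp (-θ * Complex.I) =
        2 * Complex.I * Complex.sin θ := by
      linear_combination (-Complex.I) * h +
        (Complex.exp (θ * Complex.I) - Complex.exp (-θ * Complex.I)) * Complex.I_sq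
    rw [h2]
    push_cast
    linear_combination (-4) * hsq + 4 * Complex.sin θ ^ 2 * Complex.I_sq
  rw [← mul_pow]
  have hexp : (((4 * (1 - Real.cos θ ^ 2)) ^ s : ℝ) : ℂ) =
      ∑ k ∈ Finset.range (2 * s + 1), (((-1 : ℝ) ^ (s + k) * ((2 * s).choose k : ℝ) : ℝ) : ℂ) *
        Complex.exp (((2 * k - 2 * s : ℝ) * θ : ℝ) * Complex.I) := by
    rw [Complex.ofReal_pow, hbase, mul_pow, ← pow_mul, add_pow, Finset.mul_sum]
    refine Finset.sum_congr rfl fun k hk => ?_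
    have hk' : k ≤ 2 * s := by have := Finset.mem_range.mp hk; omega
    obtain ⟨m, hm⟩ := Nat.exists_eq_add_of_le hk'
    have hmR : (2 * s : ℂ) = k + m := by exact_mod_cast hm
    have hsign : (-1 : ℂ) ^ m = (-1) ^ k := by
      have : Even (k + m) := ⟨s, by omega⟩
      rcases Nat.even_or_odd k with h | h
      · rw [h.neg_one_pow, ((Nat.even_add.mp this).mp h).neg_one_pow]
      · have hmo : Odd m := by
          rw [← Nat.not_even_iff_odd] at h ⊢
          exact fun hme => h ((Nat.even_add.mp this).mpr hme)
        rw [h.neg_one_pow, hmo.neg_one_pow]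
    rw [show 2 * s - k = m by omega, neg_pow (Complex.exp _), hsign, ← Complex.exp_nat_mul,
      ← Complex.exp_nat_mul]
    have he : Complex.exp (((2 * k - 2 * s : ℝ) * θ : ℝ) * Complex.I) =
        Complex.exp (k * (θ * Complex.I)) * Complex.exp (m * (-θ * Complex.I)) := by
      rw [← Complex.exp_add]
      congr 1
      push_cast
      rw [hmR]
      ring
    rw [he]
    push_cast
    ring
  have := congrArg Complex.re hexp
  rw [Complex.ofReal_re, Complex.re_sum] at this
  simpa only [Complex.re_ofReal_mul, Complex.exp_ofReal_mul_I_re] using this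

theorem one_sub_cos_sq_pow (s r : ℕ) (hs : s ≤ r) (θ : ℝ) :
    (1 - Real.cos θ ^ 2) ^ s = (-1 : ℝ) ^ 0 * ((2 * s).choose (s + 0) : ℝ) / 4 ^ s +
      ∑ j ∈ Finset.range r, (-1 : ℝ) ^ (j + 1) * ((2 * s).choose (s + (j + 1)) : ℝ) / 4 ^ s *
        (2 * Real.cos ((2 * (j + 1) : ℝ) * θ)) := by
  have hext : ∑ j ∈ Finset.range r, (-1 : ℝ) ^ (j + 1) *
        ((2 * s).choose (s + (j + 1)) : ℝ) / 4 ^ s * (2 * Real.cos ((2 * (j + 1) : ℝ) * θ)) =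
      ∑ j ∈ Finset.range s, (-1 : ℝ) ^ (j + 1) *
        ((2 * s).choose (s + (j + 1)) : ℝ) / 4 ^ s * (2 * Real.cos ((2 * (j + 1) : ℝ) * θ)) := by
    symm
    refine Finset.sum_subset (Finset.range_mono hs) fun j _ hj => ?_
    rw [Finset.mem_range, not_lt] at hj
    rw [Nat.choose_eq_zero_of_lt (show 2 * s < s + (j + 1) by omega)]
    simp
  have h := two_mul_sin_pow_eq_sum_range s θ
  have hsq : (-1 : ℝ) ^ s * (-1) ^ s = 1 := by rw [← mul_pow]; simp
  rw [show 2 * s + 1 = s + (s + 1) by ring, Finset.sum_range_add,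
    Finset.sum_range_succ' _ s, ← Finset.sum_range_reflect, ← add_assoc,
    ← Finset.sum_add_distrib] at h
  have hterm : ∀ j ∈ Finset.range s,
      (-1 : ℝ) ^ (s + (s - 1 - j)) * ((2 * s).choose (s - 1 - j) : ℝ) *
          Real.cos ((2 * (s - 1 - j : ℕ) - 2 * s : ℝ) * θ) +
        (-1 : ℝ) ^ (s + (s + (j + 1))) * ((2 * s).choose (s + (j + 1)) : ℝ) *
          Real.cos ((2 * (s + (j + 1) : ℕ) - 2 * s : ℝ) * θ) =
      (-1 : ℝ) ^ (j + 1) * ((2 * s).choose (s + (j + 1)) : ℝ) *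
        (2 * Real.cos ((2 * (j + 1) : ℝ) * θ)) := by
    intro j hj
    obtain ⟨m, rfl⟩ := Nat.exists_eq_add_of_lt (Finset.mem_range.mp hj)
    rw [show j + m + 1 - 1 - j = m by omega,
      Nat.choose_symm_of_eq_add (show 2 * (j + m + 1) = m + (j + m + 1 + (j + 1)) by ring),
      show (2 * (m : ℝ) - 2 * (j + m + 1 : ℕ)) * θ = -((2 * (j + 1)) * θ) by push_cast; ring,
      Real.cos_neg,
      show (2 * ((j + m + 1 + (j + 1) : ℕ) : ℝ) - 2 * (j + m + 1 : ℕ)) * θ =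
        (2 * (j + 1)) * θ by push_cast; ring,
      show j + m + 1 + m = (j + 1) + (m + m) by ring,
      show j + m + 1 + (j + m + 1 + (j + 1)) = (j + 1) + ((j + m + 1) + (j + m + 1)) by ring,
      pow_add _ (j + 1) (m + m), pow_add _ (j + 1) ((j + m + 1) + (j + m + 1)),
      Even.neg_one_pow ⟨m, rfl⟩, Even.neg_one_pow ⟨j + m + 1, rfl⟩]
    ring
  rw [Finset.sum_congr rfl hterm] at h
  rw [hext]
  have h4 : (4 : ℝ) ^ s ≠ 0 := by positivity
  refine mul_left_cancel₀ h4 ?_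
  rw [h, mul_add, Finset.mul_sum, add_comm]
  congr 1
  · simp only [add_zero, pow_add, hsq, sub_self, zero_mul, Real.cos_zero]
    field_simp
  · refine Finset.sum_congr rfl fun j _ => ?_
    field_simp

theorem dcoef_self (r : ℕ) (l : ℝ) :
    dcoef r r l = ((2 * r).choose r : ℝ) * poch l r / (4 ^ r * poch (l + 1 / 2) r) := by
  rw [dcoef, if_neg (lt_irrefl r), two_mul, ← poch_div_factorial]
  field_simp

theorem dcoef_of_pos (j n : ℕ) (hj : 0 < j) (l : ℝ) :
    dcoef (j + n) n l = 2 * (((2 * (j + n)).choose n : ℝ) * poch l n *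
      poch (l + (j + n : ℕ)) j / (4 ^ (j + n) * poch (l + 1 / 2) (j + n))) := by
  rw [dcoef, if_pos (by omega), show 2 * (j + n) = (2 * j + n) + n by ring,
    ← poch_div_factorial, show j + n - n = j by omega,
    show (2 * ((j + n : ℕ) : ℝ) + 1 - n) = (2 * j + n : ℕ) + 1 by push_cast; ring]
  field_simp

/-- decomposition of the normalized Gegenbauer polynomial
P_{2r}^{(lambda-1/2)} in terms of Chebyshev polynomials of the first kind. -/
theorem stmt9 (r : ℕ) (hr : 1 ≤ r) (l : ℝ) (hl : -(1 / 2 : ℝ) < l) (θ : ℝ) :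
    ∑ s ∈ Finset.range (r + 1), (-1 : ℝ) ^ s * (r.choose s : ℝ) *
        (poch (l + r) s / poch (l + 1 / 2) s) * (1 - Real.cos θ ^ 2) ^ s =
      ∑ s ∈ Finset.range (r + 1), dcoef r s l *
        Real.cos ((2 * r - 2 * s : ℝ) * θ) := by
  have hsum := fun j n => sum_choose_mul_poch j n l hl
  have hl1 : ∀ s ∈ Finset.range (r + 1), (-1 : ℝ) ^ s * (r.choose s : ℝ) *
        (poch (l + r) s / poch (l + 1 / 2) s) * (1 - Real.cos θ ^ 2) ^ s =
      (-1 : ℝ) ^ s * (r.choose s : ℝ) * (poch (l + r) s / poch (l + 1 / 2) s) *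
          ((-1 : ℝ) ^ 0 * ((2 * s).choose (s + 0) : ℝ) / 4 ^ s) +
        ∑ j ∈ Finset.range r, (-1 : ℝ) ^ s * (r.choose s : ℝ) *
          (poch (l + r) s / poch (l + 1 / 2) s) *
          ((-1 : ℝ) ^ (j + 1) * ((2 * s).choose (s + (j + 1)) : ℝ) / 4 ^ s) *
          (2 * Real.cos ((2 * (j + 1) : ℝ) * θ)) := by
    intro s hs
    rw [one_sub_cos_sq_pow s r (by have := Finset.mem_range.mp hs; omega), mul_add,
      Finset.mul_sum]
    congr 1
    exact Finset.sum_congr rfl fun j _ => by ring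
  rw [Finset.sum_congr rfl hl1, Finset.sum_add_distrib, Finset.sum_comm,
    Finset.sum_range_succ (fun s => dcoef r s l * _), ← Finset.sum_range_reflect _ r, add_comm]
  congr 1
  · refine Finset.sum_congr rfl fun j hj => ?_
    obtain ⟨n, rfl⟩ := Nat.exists_eq_add_of_lt (Finset.mem_range.mp hj)
    rw [← Finset.sum_mul, show j + n + 1 = (n + 1) + j by ring,
      show n + 1 + j - 1 - j = n by omega, hsum (n + 1) j, dcoef_of_pos (n + 1) j n.succ_pos,
      show (2 * ((n + 1 + j : ℕ) : ℝ) - 2 * j) = 2 * (n + 1) by push_cast; ring]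
    ring
  · have h := hsum 0 r
    rw [zero_add] at h
    rw [h, dcoef_self, sub_self, zero_mul, Real.cos_zero, poch_zero, mul_one, mul_one]
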